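/- For every nonnegative integer n, ped(9n + 7) ≡ 0 (mod 12). -/

import Mathlib

/-- `ped n` is the number of partitions of `n` in which the even parts are
distinct (and the odd parts are unrestricted). -/
def ped (n : ℕ) : ℕ :=
  Fintype.card {p : n.Partition // ∀ x ∈ p.parts, Even x → p.parts.count x ≤ 1}

/-! Let `F(q) = ∑ (-1) ^ n * ped(n) * q ^ n`, and let `φ` and `ψ` be Ramanujan's theta functions.
Gauss's product for `ψ` and the identity `ψ(q) ^ 2 = φ(q) * ψ(q ^ 2)` give `F * φ = ψ`.

Write `φ(q) = a(q ^ 3) + 2 * q * b(q ^ 3)`, where `a(q) = φ(q ^ 3)`. Euler's product satisfies a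
norm relation over the cube roots of unity, which `φ` inherits as an eta quotient:
`(a ^ 3 + 8 * q * b ^ 3) * a = φ ^ 4`. Together with the 3-dissection of
`ψ(q) ^ 2 = φ(q) * ψ(q ^ 2)` it shows that `F₁`, the part of `F` with exponents `1` modulo `3`,
satisfies `F₁ * φ(q) ^ 2 = -φ(q ^ 3) * ψ(q ^ 3)`. The right-hand side is a series in `q ^ 3`,
and `φ ^ 2` has the 3-dissection `a ^ 2`, `4 * a * b`, `4 * b ^ 2`; so by Cramer's rule
the part of `F₁` with exponents `2` modulo `3` is, up to a unit, a multiple of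
`(4 * a * b) ^ 2 - a ^ 2 * (4 * b ^ 2)`, which is `12 * a ^ 2 * b ^ 2`. -/

open PowerSeries Filter Topology
open scoped PowerSeries.WithPiTopology

theorem C_dvd_iff_forall_dvd_coeff {R : Type*} [CommSemiring R] {a : R} {f : R⟦X⟧} :
    C a ∣ f ↔ ∀ n, a ∣ coeff n f := by
  refine ⟨?_, fun h ↦ ?_⟩
  · rintro ⟨g, rfl⟩ n
    exact ⟨coeff n g, coeff_C_mul n g a⟩
  · choose g hg using h
    exact ⟨PowerSeries.mk g, by ext n; simp [hg]⟩

section Multisection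

variable {R : Type*} [CommRing R]

/-- The substitution `f(q) ↦ f(q ^ m)`. -/
noncomputable abbrev dilate (m : ℕ) [NeZero m] : R⟦X⟧ →ₐ[R] R⟦X⟧ := expand m (NeZero.ne m)

/-- The terms of `f` whose exponents are congruent to `r` modulo `m`, contracted to
`∑ n, a (m * n + r) * X ^ n`. -/
noncomputable def multisection (m r : ℕ) (f : R⟦X⟧) : R⟦X⟧ :=
  PowerSeries.mk fun n ↦ coeff (m * n + r) f

@[simp]
theorem coeff_multisection (m r n : ℕ) (f : R⟦X⟧) :
    coeff n (multisection m r f) = coeff (m * n + r) f :=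
  coeff_mk _ _

theorem multisection_add (m r : ℕ) (f g : R⟦X⟧) :
    multisection m r (f + g) = multisection m r f + multisection m r g := by
  ext n
  simp

theorem constantCoeff_multisection_zero (m : ℕ) (f : R⟦X⟧) :
    constantCoeff (multisection m 0 f) = constantCoeff f := by
  rw [← coeff_zero_eq_constantCoeff_apply, coeff_multisection, mul_zero, zero_add,
    coeff_zero_eq_constantCoeff_apply]

theorem multisection_X_pow_mul_dilate {m r s : ℕ} [NeZero m] (hr : r < m) (hs : s < m)
    (f : R⟦X⟧) : multisection m r (X ^ s * dilate m f) = if r = s then f else 0 := by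
  ext n
  rw [coeff_multisection, coeff_X_pow_mul']
  split_ifs with h₁ h₂ h₂
  · rw [h₂, Nat.add_sub_cancel, coeff_expand_mul]
  · refine coeff_expand_of_not_dvd _ _ _ fun hdvd ↦ h₂ ?_
    have h : m * n + r ≡ s [MOD m] := ((Nat.modEq_iff_dvd' h₁).mpr hdvd).symm
    rw [Nat.ModEq, Nat.mul_add_mod] at h
    exact Nat.ModEq.eq_of_lt_of_lt h hr hs
  · lia
  · simp

theorem sum_X_pow_mul_dilate_multisection (m : ℕ) [NeZero m] (f : R⟦X⟧) :
    ∑ r ∈ Finset.range m, X ^ r * dilate m (multisection m r f) = f := by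
  ext n
  have hn : n % m < m := Nat.mod_lt n (NeZero.pos m)
  have hdiv : n - n % m = m * (n / m) := by have := Nat.div_add_mod n m; lia
  rw [map_sum, Finset.sum_eq_single_of_mem (n % m) (Finset.mem_range.mpr hn)]
  · rw [coeff_X_pow_mul', if_pos (Nat.mod_le n m), hdiv, coeff_expand_mul, coeff_multisection,
      Nat.div_add_mod]
  · intro r hr hne
    rw [coeff_X_pow_mul']
    split_ifs with hle
    · refine coeff_expand_of_not_dvd _ _ _ fun hdvd ↦ hne ?_
      rw [← (Nat.modEq_iff_dvd' hle).mpr hdvd, Nat.mod_eq_of_lt (Finset.mem_range.mp hr)]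
    · rfl

/-- `f = f₀(q ^ 3) + q * f₁(q ^ 3) + q ^ 2 * f₂(q ^ 3)`, the 3-dissection of `f`. -/
def IsTrisection (f f₀ f₁ f₂ : R⟦X⟧) : Prop :=
  f = dilate 3 f₀ + X * dilate 3 f₁ + X ^ 2 * dilate 3 f₂

theorem isTrisection_multisection (f : R⟦X⟧) :
    IsTrisection f (multisection 3 0 f) (multisection 3 1 f) (multisection 3 2 f) := by
  have h := sum_X_pow_mul_dilate_multisection 3 f
  simp only [Finset.sum_range_succ, Finset.sum_range_zero, zero_add, pow_zero, one_mul,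
    pow_one] at h
  exact h.symm

theorem isTrisection_dilate (f : R⟦X⟧) : IsTrisection (dilate 3 f) f 0 0 := by
  simp [IsTrisection]

namespace IsTrisection

variable {f f₀ f₁ f₂ g g₀ g₁ g₂ : R⟦X⟧}

theorem multisection_eq (hf : IsTrisection f f₀ f₁ f₂) {r : ℕ} (hr : r < 3) :
    multisection 3 r f = if r = 0 then f₀ else if r = 1 then f₁ else f₂ := by
  have h : f = X ^ 0 * dilate 3 f₀ + X ^ 1 * dilate 3 f₁ + X ^ 2 * dilate 3 f₂ := by
    rw [pow_zero, pow_one, one_mul]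
    exact hf
  rw [h]
  simp only [multisection_add]
  rw [multisection_X_pow_mul_dilate hr three_pos,
    multisection_X_pow_mul_dilate hr (by lia), multisection_X_pow_mul_dilate hr (by lia)]
  interval_cases r <;> simp

theorem unique (hf : IsTrisection f f₀ f₁ f₂) (hg : IsTrisection f g₀ g₁ g₂) :
    f₀ = g₀ ∧ f₁ = g₁ ∧ f₂ = g₂ :=
  ⟨(hf.multisection_eq three_pos).symm.trans (hg.multisection_eq three_pos),
    (hf.multisection_eq (r := 1) (by lia)).symm.trans (hg.multisection_eq (by lia)),
    (hf.multisection_eq (r := 2) (by lia)).symm.trans (hg.multisection_eq (by lia))⟩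

theorem mul (hf : IsTrisection f f₀ f₁ f₂) (hg : IsTrisection g g₀ g₁ g₂) :
    IsTrisection (f * g) (f₀ * g₀ + X * (f₁ * g₂ + f₂ * g₁))
      (f₀ * g₁ + f₁ * g₀ + X * (f₂ * g₂)) (f₀ * g₂ + f₁ * g₁ + f₂ * g₀) := by
  rw [IsTrisection, hf, hg]
  simp only [map_mul, map_add, expand_X]
  ring

theorem dilate_two (hf : IsTrisection f f₀ f₁ f₂) :
    IsTrisection (dilate 2 f) (dilate 2 f₀) (X * dilate 2 f₂) (dilate 2 f₁) := by
  have hcomm (g : R⟦X⟧) : dilate 2 (dilate 3 g) = dilate 3 (dilate 2 g) := by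
    rw [← expand_mul, ← expand_mul]
  rw [IsTrisection, hf]
  simp only [map_mul, map_add, map_pow, expand_X, hcomm]
  ring

end IsTrisection

end Multisection

section CubicNorm

variable {R : Type*} [CommRing R]

/-- The norm of `f(q)` down to series in `q ^ 3`, namely `f(q) * f(ω * q) * f(ω ^ 2 * q)` for a
primitive cube root of unity `ω`, contracted by `q ^ 3 ↦ q`; the formula is this product in terms
of the 3-dissection of `f`. -/
noncomputable def cubicNorm (f : R⟦X⟧) : R⟦X⟧ :=
  multisection 3 0 f ^ 3 + X * multisection 3 1 f ^ 3 + X ^ 2 * multisection 3 2 f ^ 3 -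
    3 * X * (multisection 3 0 f * multisection 3 1 f * multisection 3 2 f)

theorem IsTrisection.cubicNorm_eq {f f₀ f₁ f₂ : R⟦X⟧} (hf : IsTrisection f f₀ f₁ f₂) :
    cubicNorm f = f₀ ^ 3 + X * f₁ ^ 3 + X ^ 2 * f₂ ^ 3 - 3 * X * (f₀ * f₁ * f₂) := by
  obtain ⟨h₀, h₁, h₂⟩ := (isTrisection_multisection f).unique hf
  rw [cubicNorm, h₀, h₁, h₂]

theorem cubicNorm_mul (f g : R⟦X⟧) : cubicNorm (f * g) = cubicNorm f * cubicNorm g := by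
  have hf := isTrisection_multisection f
  have hg := isTrisection_multisection g
  rw [(hf.mul hg).cubicNorm_eq, hf.cubicNorm_eq, hg.cubicNorm_eq]
  ring

theorem cubicNorm_dilate_three (f : R⟦X⟧) : cubicNorm (dilate 3 f) = f ^ 3 := by
  rw [(isTrisection_dilate f).cubicNorm_eq]
  ring

theorem cubicNorm_dilate_two (f : R⟦X⟧) : cubicNorm (dilate 2 f) = dilate 2 (cubicNorm f) := by
  have hf := isTrisection_multisection f
  rw [hf.dilate_two.cubicNorm_eq, hf.cubicNorm_eq]
  simp only [map_sub, map_add, map_mul, map_pow, map_ofNat, expand_X]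
  ring

theorem cubicNorm_one_sub_X_pow_add_one (n : ℕ) :
    cubicNorm (1 - X ^ (3 * n + 1) : R⟦X⟧) = 1 - X ^ (3 * n + 1) := by
  have h : IsTrisection (1 - X ^ (3 * n + 1) : R⟦X⟧) 1 (-X ^ n) 0 := by
    simp only [IsTrisection, map_one, map_neg, map_pow, expand_X, map_zero]
    ring
  rw [h.cubicNorm_eq]
  ring

theorem cubicNorm_one_sub_X_pow_add_two (n : ℕ) :
    cubicNorm (1 - X ^ (3 * n + 2) : R⟦X⟧) = 1 - X ^ (3 * n + 2) := by
  have h : IsTrisection (1 - X ^ (3 * n + 2) : R⟦X⟧) 1 0 (-X ^ n) := by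
    simp only [IsTrisection, map_one, map_neg, map_pow, expand_X, map_zero]
    ring
  rw [h.cubicNorm_eq]
  ring

/-- The norm relation `f(q) * f(ω * q) * f(ω ^ 2 * q) * f(q ^ 9) = f(q ^ 3) ^ 4`, contracted by
`q ^ 3 ↦ q`, which Euler's product shares with the eta quotients of level prime to `3`. -/
def IsEtaLike (f : R⟦X⟧) : Prop := cubicNorm f * dilate 3 f = f ^ 4

namespace IsEtaLike

variable {f g : R⟦X⟧}

theorem mul (hf : IsEtaLike f) (hg : IsEtaLike g) : IsEtaLike (f * g) := by
  unfold IsEtaLike at *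
  rw [cubicNorm_mul, map_mul, mul_pow, ← hf, ← hg]
  ring

theorem of_mul_right [IsDomain R] (hfg : IsEtaLike (f * g)) (hg : IsEtaLike g) (hg0 : g ≠ 0) :
    IsEtaLike f := by
  unfold IsEtaLike at *
  apply mul_right_cancel₀ (pow_ne_zero 4 hg0)
  rw [← mul_pow, ← hfg, ← hg, cubicNorm_mul, map_mul]
  ring

theorem dilate_two (hf : IsEtaLike f) : IsEtaLike (dilate 2 f) := by
  have hcomm : dilate 3 (dilate 2 f) = dilate 2 (dilate 3 f) := by
    rw [← expand_mul, ← expand_mul]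
  rw [IsEtaLike, cubicNorm_dilate_two, hcomm, ← map_mul, hf, map_pow]

end IsEtaLike

end CubicNorm

section Continuity

variable {R : Type*} [CommRing R] [TopologicalSpace R]

theorem continuous_of_continuous_coeff {F : R⟦X⟧ → R⟦X⟧}
    (h : ∀ n, Continuous fun f ↦ coeff n (F f)) : Continuous F := by
  refine continuous_iff_continuousAt.mpr fun f ↦ ?_
  rw [ContinuousAt, WithPiTopology.tendsto_iff_coeff_tendsto]
  exact fun n ↦ (h n).tendsto f

theorem continuous_multisection (m r : ℕ) : Continuous (multisection m r : R⟦X⟧ → R⟦X⟧) :=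
  continuous_of_continuous_coeff fun n ↦ by
    simpa only [coeff_multisection] using WithPiTopology.continuous_coeff R (m * n + r)

theorem continuous_dilate (m : ℕ) [NeZero m] : Continuous (dilate m : R⟦X⟧ → R⟦X⟧) :=
  continuous_of_continuous_coeff fun n ↦ by
    simp only [coeff_expand]
    split_ifs
    · exact WithPiTopology.continuous_coeff R _
    · exact continuous_const

theorem continuous_evalNegHom [IsTopologicalRing R] :
    Continuous (evalNegHom : R⟦X⟧ → R⟦X⟧) :=
  continuous_of_continuous_coeff fun n ↦ by
    simp only [evalNegHom, coeff_rescale]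
    exact continuous_const.mul (WithPiTopology.continuous_coeff R n)

theorem continuous_cubicNorm [IsTopologicalRing R] :
    Continuous (cubicNorm : R⟦X⟧ → R⟦X⟧) := by
  have := continuous_multisection (R := R) 3
  unfold cubicNorm
  fun_prop

end Continuity

section CountSeries

open Finset.HasAntidiagonal

variable {ι κ : Type*}

/-- The generating series `∑ i, q ^ f i` of a family of exponents. Its coefficients are counted by
`Nat.card`, so it has this meaning when `f` satisfies `IsProper`. -/
noncomputable def countSeries (f : ι → ℤ) : ℤ⟦X⟧ :=
  PowerSeries.mk fun n ↦ (Nat.card {i // f i = n} : ℤ)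

theorem coeff_countSeries (f : ι → ℤ) (n : ℕ) :
    coeff n (countSeries f) = Nat.card {i // f i = n} :=
  coeff_mk _ _

/-- A family of exponents that are nonnegative and take each value finitely often. -/
structure IsProper (f : ι → ℤ) : Prop where
  nonneg : ∀ i, 0 ≤ f i
  finite_fiber : ∀ n : ℕ, Finite {i // f i = n}

theorem isProper_of_abs_le {f : ℤ → ℤ} (hf : ∀ i, |i| ≤ f i) : IsProper f where
  nonneg i := (abs_nonneg i).trans (hf i)
  finite_fiber n := (Set.finite_Icc (-n : ℤ) n).subset fun i hi ↦
    Set.mem_Icc.mpr (abs_le.mp ((hf i).trans_eq hi))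

/-- The fibers of `f i + g k`, sorted by the values of `f` and `g`. -/
def IsProper.fiberEquiv {f : ι → ℤ} {g : κ → ℤ} (hf : IsProper f) (hg : IsProper g) (n : ℕ) :
    {p : ι × κ // f p.1 + g p.2 = n} ≃
      Σ a : antidiagonal n, {i // f i = a.1.1} × {k // g k = a.1.2} where
  toFun p := ⟨⟨((f p.1.1).toNat, (g p.1.2).toNat), by
      have := hf.nonneg p.1.1
      have := hg.nonneg p.1.2
      have := p.2
      rw [mem_antidiagonal]
      lia⟩, ⟨p.1.1, (Int.toNat_of_nonneg (hf.nonneg _)).symm⟩,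
        ⟨p.1.2, (Int.toNat_of_nonneg (hg.nonneg _)).symm⟩⟩
  invFun s := ⟨(s.2.1.1, s.2.2.1), by
    rw [s.2.1.2, s.2.2.2]
    exact_mod_cast mem_antidiagonal.mp s.1.2⟩
  left_inv _ := rfl
  right_inv := by
    rintro ⟨⟨⟨a, b⟩, h⟩, ⟨i, hi⟩, ⟨k, hk⟩⟩
    dsimp only at hi hk
    obtain rfl : (f i).toNat = a := by lia
    obtain rfl : (g k).toNat = b := by lia
    rfl

theorem countSeries_mul {f : ι → ℤ} {g : κ → ℤ} (hf : IsProper f) (hg : IsProper g) :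
    countSeries f * countSeries g = countSeries fun p : ι × κ ↦ f p.1 + g p.2 := by
  ext n
  simp only [coeff_mul, coeff_countSeries]
  have (a : antidiagonal n) : Finite ({i // f i = a.1.1} × {k // g k = a.1.2}) := by
    have := hf.finite_fiber a.1.1
    have := hg.finite_fiber a.1.2
    infer_instance
  rw [Nat.card_congr (hf.fiberEquiv hg n), Nat.card_sigma]
  simp only [Nat.card_prod]
  rw [Finset.sum_coe_sort (antidiagonal n)
    (fun a ↦ Nat.card {i // f i = a.1} * Nat.card {k // g k = a.2})]
  push_cast
  rfl

theorem countSeries_comp_equiv (e : κ ≃ ι) (f : ι → ℤ) :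
    countSeries (fun k ↦ f (e k)) = countSeries f := by
  ext n
  simp only [coeff_countSeries, Nat.cast_inj]
  exact Nat.card_congr (e.subtypeEquiv fun _ ↦ Iff.rfl)

theorem multisection_countSeries {m r : ℕ} [NeZero m] {f : ι → ℤ} {h : κ → ℤ} {g : κ → ι}
    (hg : g.Injective) (hfg : ∀ k, f (g k) = m * h k + r)
    (hrange : ∀ i, f i ≡ r [ZMOD m] → i ∈ Set.range g) :
    multisection m r (countSeries f) = countSeries h := by
  ext n
  simp only [coeff_multisection, coeff_countSeries, Nat.cast_inj]
  have hfiber (k : κ) : f (g k) = (m * n + r : ℕ) ↔ h k = n := by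
    rw [hfg]
    push_cast
    rw [add_left_inj, mul_right_inj' (by exact_mod_cast NeZero.ne m)]
  refine (Nat.card_eq_of_bijective (fun k ↦ ⟨g k.1, (hfiber k.1).mpr k.2⟩) ⟨?_, ?_⟩).symm
  · exact fun k l hkl ↦ Subtype.ext (hg (congrArg Subtype.val hkl))
  · rintro ⟨i, hi⟩
    obtain ⟨k, rfl⟩ := hrange i (by simp [hi, Int.ModEq])
    exact ⟨⟨k, (hfiber k).mp hi⟩, rfl⟩

theorem multisection_countSeries_eq_zero {m r : ℕ} {f : ι → ℤ}
    (hf : ∀ i, ¬f i ≡ r [ZMOD m]) : multisection m r (countSeries f) = 0 := by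
  ext n
  have : IsEmpty {i // f i = (m * n + r : ℕ)} := ⟨fun i ↦ hf i.1 (by simp [i.2, Int.ModEq])⟩
  rw [coeff_multisection, coeff_countSeries, Nat.card_of_isEmpty, Nat.cast_zero, map_zero]

theorem dilate_countSeries (m : ℕ) [NeZero m] (f : ι → ℤ) :
    dilate m (countSeries f) = countSeries fun i ↦ m * f i := by
  ext n
  rw [coeff_expand]
  split_ifs with h
  · obtain ⟨k, rfl⟩ := h
    rw [Nat.mul_div_cancel_left _ (NeZero.pos m)]
    have (i : ι) : (m : ℤ) * f i = (m * k : ℕ) ↔ f i = k := by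
      push_cast
      exact mul_right_inj' (by exact_mod_cast NeZero.ne m)
    simp only [coeff_countSeries, this]
  · have : IsEmpty {i // (m : ℤ) * f i = n} :=
      ⟨fun i ↦ h (Int.natCast_dvd_natCast.mp ⟨_, i.2.symm⟩)⟩
    simp [coeff_countSeries]

theorem coeff_countSeries_eq_coeff_sum {f : ι → ℤ} (hf : ∀ i, 0 ≤ f i) {n : ℕ} (s : Finset ι)
    (hs : ∀ i ∉ s, n < f i) :
    coeff n (countSeries f) = coeff n (∑ i ∈ s, (X : ℤ⟦X⟧) ^ (f i).toNat) := by
  classical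
  simp only [coeff_countSeries, map_sum, coeff_X_pow]
  rw [Finset.sum_boole, Nat.cast_inj]
  refine Nat.subtype_card _ fun i ↦ ?_
  rw [Finset.mem_filter]
  have := hf i
  have := hs i
  grind

end CountSeries

section Theta

/-- Ramanujan's theta function `φ(q) = ∑ q ^ (x ^ 2)`. -/
noncomputable def ramanujanPhi : ℤ⟦X⟧ := countSeries fun x : ℤ ↦ x ^ 2

/-- Ramanujan's theta function `ψ(q) = ∑ q ^ (t (t + 1) / 2)`, the sum running over `t ≥ 0`;
here `t = 2 k` for `k ≥ 0` and `t = -2 k - 1` for `k < 0`. -/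
noncomputable def ramanujanPsi : ℤ⟦X⟧ := countSeries fun k : ℤ ↦ 2 * k ^ 2 + k

theorem isProper_sq : IsProper fun x : ℤ ↦ x ^ 2 :=
  isProper_of_abs_le fun x ↦ by grind [sq_abs x, Int.le_self_sq |x|]

theorem isProper_two_mul_sq_add_self : IsProper fun k : ℤ ↦ 2 * k ^ 2 + k :=
  isProper_of_abs_le fun k ↦ abs_le'.mpr ⟨by nlinarith, by nlinarith [Int.le_self_sq (-k)]⟩

theorem isProper_two_mul_two_mul_sq_add_self : IsProper fun k : ℤ ↦ 2 * (2 * k ^ 2 + k) :=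
  isProper_of_abs_le fun k ↦
    abs_le'.mpr ⟨by nlinarith [Int.le_self_sq (-k)], by nlinarith [Int.le_self_sq (-k)]⟩

/-- The change of variables `x = k - l`, `2 * y ^ 2 + y = (k + l) * (k + l + 1) / 2`, for which
`(2 * k ^ 2 + k) + (2 * l ^ 2 + l) = x ^ 2 + 2 * (2 * y ^ 2 + y)`. -/
def thetaEquiv : ℤ × ℤ ≃ ℤ × ℤ where
  toFun p := (p.1 - p.2, if Even (p.1 + p.2) then (p.1 + p.2) / 2 else -(p.1 + p.2 + 1) / 2)
  invFun p := if Even p.1 then (p.2 + p.1 / 2, p.2 - p.1 / 2)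
    else ((p.1 - 1) / 2 - p.2, -(p.1 + 1) / 2 - p.2)
  left_inv p := by grind
  right_inv p := by grind

theorem ramanujanPsi_sq : ramanujanPsi ^ 2 = ramanujanPhi * dilate 2 ramanujanPsi := by
  rw [sq, ramanujanPsi, ramanujanPhi, dilate_countSeries,
    countSeries_mul isProper_two_mul_sq_add_self isProper_two_mul_sq_add_self,
    Nat.cast_ofNat, countSeries_mul isProper_sq isProper_two_mul_two_mul_sq_add_self]
  refine Eq.trans ?_ (countSeries_comp_equiv thetaEquiv _)
  congr 1
  ext ⟨k, l⟩
  simp only [thetaEquiv, Equiv.coe_fn_mk]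
  split_ifs with h
  · obtain ⟨y, hy⟩ := h
    obtain rfl : k = y + y - l := by lia
    rw [show (y + y - l + l) / 2 = y by lia]
    ring
  · obtain ⟨y, hy⟩ := Int.not_even_iff_odd.mp h
    obtain rfl : k = 2 * y + 1 - l := by lia
    rw [show -(2 * y + 1 - l + l + 1) / 2 = -y - 1 by lia]
    ring

theorem two_dvd_coeff_ramanujanPhi {n : ℕ} (hn : n ≠ 0) : 2 ∣ coeff n ramanujanPhi := by
  rw [ramanujanPhi, coeff_countSeries]
  by_cases hsq : ∃ x : ℤ, x ^ 2 = n
  · obtain ⟨x, hx⟩ := hsq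
    have hx0 : x ≠ -x := by
      rintro h
      obtain rfl : x = 0 := by lia
      exact hn (by simpa using hx.symm)
    have hroots : {y : ℤ | y ^ 2 = n} = {x, -x} := by
      ext y
      simp [← hx, sq_eq_sq_iff_eq_or_eq_neg]
    have hcard : Nat.card {y : ℤ // y ^ 2 = n} = 2 :=
      (Nat.card_coe_set_eq {y : ℤ | y ^ 2 = n}).trans (hroots ▸ Set.ncard_pair hx0)
    simp [hcard]
  · have : IsEmpty {x : ℤ // x ^ 2 = n} := ⟨fun x ↦ hsq ⟨x, x.2⟩⟩
    simp

theorem exists_isTrisection_ramanujanPhi :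
    ∃ b, IsTrisection ramanujanPhi (dilate 3 ramanujanPhi) (2 * b) 0 := by
  have h₀ : multisection 3 0 ramanujanPhi = dilate 3 ramanujanPhi := by
    rw [ramanujanPhi, dilate_countSeries]
    refine multisection_countSeries (mul_right_injective₀ three_ne_zero) (fun y ↦ ?_) fun x hx ↦ ?_
    · push_cast
      ring
    · obtain ⟨y, rfl⟩ := Int.prime_three.dvd_of_dvd_pow (Int.modEq_zero_iff_dvd.mp hx)
      exact ⟨y, rfl⟩
  have h₁ : (2 : ℤ⟦X⟧) ∣ multisection 3 1 ramanujanPhi := by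
    rw [← map_ofNat (C (R := ℤ)), C_dvd_iff_forall_dvd_coeff]
    exact fun n ↦ by
      simpa only [coeff_multisection] using two_dvd_coeff_ramanujanPhi (by lia)
  have h₂ : multisection 3 2 ramanujanPhi = 0 :=
    multisection_countSeries_eq_zero fun x hx ↦ by
      have hx' := (ZMod.intCast_eq_intCast_iff _ _ 3).mpr hx
      push_cast at hx'
      exact (by decide : ∀ y : ZMod 3, y ^ 2 ≠ 2) x hx'
  obtain ⟨b, hb⟩ := h₁
  exact ⟨b, by simpa only [h₀, hb, h₂] using isTrisection_multisection ramanujanPhi⟩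

theorem isTrisection_ramanujanPsi :
    IsTrisection ramanujanPsi (multisection 3 0 ramanujanPsi) (dilate 3 ramanujanPsi) 0 := by
  have h₁ : multisection 3 1 ramanujanPsi = dilate 3 ramanujanPsi := by
    rw [ramanujanPsi, dilate_countSeries]
    refine multisection_countSeries (g := fun m ↦ -3 * m - 1) (fun m n h ↦ by grind)
      (fun m ↦ ?_) fun k hk ↦ ?_
    · push_cast
      ring
    · have hk' := (ZMod.intCast_eq_intCast_iff _ _ 3).mpr hk
      push_cast at hk'
      have hk₂ : (k : ZMod 3) = (2 : ℤ) :=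
        (by decide : ∀ y : ZMod 3, 2 * y ^ 2 + y = 1 → y = 2) k hk'
      have hmod : k % 3 = 2 := (ZMod.intCast_eq_intCast_iff k 2 3).mp hk₂
      exact ⟨(-k - 1) / 3, by lia⟩
  have h₂ : multisection 3 2 ramanujanPsi = 0 :=
    multisection_countSeries_eq_zero fun k hk ↦ by
      have hk' := (ZMod.intCast_eq_intCast_iff _ _ 3).mpr hk
      push_cast at hk'
      exact (by decide : ∀ y : ZMod 3, 2 * y ^ 2 + y ≠ 2) k hk'
  simpa only [h₁, h₂] using isTrisection_multisection ramanujanPsi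

theorem constantCoeff_ramanujanPhi : constantCoeff ramanujanPhi = 1 := by
  rw [← coeff_zero_eq_constantCoeff_apply, ramanujanPhi, coeff_countSeries]
  simp

theorem constantCoeff_ramanujanPsi : constantCoeff ramanujanPsi = 1 := by
  rw [← coeff_zero_eq_constantCoeff_apply, ramanujanPsi, coeff_countSeries]
  have (k : ℤ) : 2 * k ^ 2 + k = (0 : ℕ) ↔ k = 0 := by
    refine ⟨fun h ↦ ?_, fun h ↦ by simp [h]⟩
    have hk : k * (2 * k + 1) = 0 := by linear_combination h
    exact (mul_eq_zero.mp hk).resolve_right (by lia)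
  simp only [this]
  simp

end Theta

section EulerProduct

/-- Euler's product `∏ (1 - q ^ n)`. -/
noncomputable def eulerProduct : ℤ⟦X⟧ := ∏' n : ℕ, (1 - X ^ (n + 1))

theorem eulerProduct_ne_zero : eulerProduct ≠ 0 :=
  WithPiTopology.tprod_one_sub_X_pow_ne_zero ℤ

theorem tendsto_prod_one_sub_X_pow {m : ℕ} (hm : 0 < m) :
    Tendsto (fun n ↦ ∏ j ∈ Finset.range (m * n), (1 - X ^ (j + 1) : ℤ⟦X⟧)) atTop
      (𝓝 eulerProduct) :=
  (WithPiTopology.multipliable_one_sub_X_pow ℤ).hasProd.tendsto_prod_nat.comp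
    (tendsto_id.const_mul_atTop' hm)

theorem cubicNorm_prod_one_sub_X_pow {R : Type*} [CommRing R] (n : ℕ) :
    cubicNorm (∏ j ∈ Finset.range (3 * n), (1 - X ^ (j + 1) : R⟦X⟧)) *
        dilate 3 (∏ j ∈ Finset.range n, (1 - X ^ (j + 1))) =
      (∏ j ∈ Finset.range (3 * n), (1 - X ^ (j + 1))) *
        (∏ j ∈ Finset.range n, (1 - X ^ (j + 1))) ^ 3 := by
  induction n with
  | zero =>
    have h : IsTrisection (1 : R⟦X⟧) 1 0 0 := by simpa using isTrisection_dilate (1 : R⟦X⟧)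
    simp [h.cubicNorm_eq]
  | succ n ih =>
    have hdilate : dilate 3 (1 - X ^ (n + 1) : R⟦X⟧) = 1 - X ^ (3 * n + 3) := by
      rw [map_sub, map_one, map_pow, expand_X, ← pow_mul, mul_add_one]
    have h := cubicNorm_dilate_three (1 - X ^ (n + 1) : R⟦X⟧)
    rw [hdilate] at h
    rw [show 3 * (n + 1) = 3 * n + 1 + 1 + 1 from rfl]
    simp only [Finset.prod_range_succ, cubicNorm_mul, map_mul, add_assoc, Nat.reduceAdd]
    rw [cubicNorm_one_sub_X_pow_add_one, cubicNorm_one_sub_X_pow_add_two, h, hdilate, mul_pow]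
    linear_combination (1 - X ^ (3 * n + 1)) * (1 - X ^ (3 * n + 2)) * (1 - X ^ (3 * n + 3)) *
      (1 - X ^ (n + 1)) ^ 3 * ih

theorem isEtaLike_eulerProduct : IsEtaLike eulerProduct := by
  have h₁ := tendsto_prod_one_sub_X_pow one_pos
  have h₃ := tendsto_prod_one_sub_X_pow three_pos
  simp only [one_mul] at h₁
  have hleft := ((continuous_cubicNorm.tendsto _).comp h₃).mul
    (((continuous_dilate 3).tendsto _).comp h₁)
  have hright := h₃.mul (h₁.pow 3)
  rw [← pow_succ'] at hright
  exact tendsto_nhds_unique (hleft.congr cubicNorm_prod_one_sub_X_pow) hright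

end EulerProduct

section GaussProduct

/-- The factor `(1 - q ^ (2 j + 2)) / (1 - q ^ (2 j + 1))` of Gauss's product for `ψ`. -/
noncomputable def gaussFactor (j : ℕ) : ℤ⟦X⟧ :=
  (1 - X ^ (2 * j + 2)) * invOfUnit (1 - X ^ (2 * j + 1)) 1

theorem gaussFactor_mul (j : ℕ) : gaussFactor j * (1 - X ^ (2 * j + 1)) = 1 - X ^ (2 * j + 2) := by
  rw [gaussFactor, mul_assoc, invOfUnit_mul _ _ (by simp), mul_one]

theorem one_sub_X_pow_succ_ne_zero (n : ℕ) : (1 - X ^ (n + 1) : ℤ⟦X⟧) ≠ 0 := fun h ↦ by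
  simpa using congrArg constantCoeff h

/-- The finite sum in Shanks's identity. -/
noncomputable def shanksSum (n : ℕ) : ℤ⟦X⟧ :=
  ∑ s ∈ Finset.range (n + 1), (∏ j ∈ Finset.Ico s n, gaussFactor j) * X ^ (s * (2 * n + 1))

theorem shanks_telescope {N r : ℕ} (hr : r ≤ N) :
    ∑ s ∈ Finset.range (r + 1), (∏ j ∈ Finset.Ico s N, gaussFactor j) *
        ((1 - X ^ (2 * N + 2)) * X ^ (s * (2 * N + 3)) -
          (1 - X ^ (2 * N + 1)) * X ^ (s * (2 * N + 1))) =
      (∏ j ∈ Finset.Ico r N, gaussFactor j) * X ^ ((r + 1) * (2 * N + 1)) *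
        (1 - X ^ (2 * r + 1)) := by
  induction r with
  | zero =>
    rw [zero_add, Finset.sum_range_one]
    ring
  | succ r ih =>
    rw [Finset.sum_range_succ, ih (by lia), Finset.prod_eq_prod_Ico_succ_bot (by lia)]
    linear_combination (∏ j ∈ Finset.Ico (r + 1) N, gaussFactor j) * X ^ ((r + 1) * (2 * N + 1)) *
      gaussFactor_mul r

theorem shanksSum_succ (n : ℕ) :
    shanksSum (n + 1) =
      shanksSum n + X ^ ((n + 1) * (2 * n + 1)) + X ^ ((n + 1) * (2 * n + 3)) := by
  apply mul_right_cancel₀ (one_sub_X_pow_succ_ne_zero (2 * n))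
  have h : (1 - X ^ (2 * n + 2)) * ∑ s ∈ Finset.range (n + 1),
        (∏ j ∈ Finset.Ico s n, gaussFactor j) * X ^ (s * (2 * n + 3)) -
      (1 - X ^ (2 * n + 1)) * shanksSum n =
        X ^ ((n + 1) * (2 * n + 1)) * (1 - X ^ (2 * n + 1)) := by
    have h := shanks_telescope le_rfl (N := n)
    rw [Finset.Ico_self, Finset.prod_empty, one_mul] at h
    rw [← h, shanksSum, Finset.mul_sum, Finset.mul_sum, ← Finset.sum_sub_distrib]
    exact Finset.sum_congr rfl fun s _ ↦ by ring
  rw [shanksSum, Finset.sum_range_succ, Finset.Ico_self, Finset.prod_empty, one_mul]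
  have hs : ∑ s ∈ Finset.range (n + 1), (∏ j ∈ Finset.Ico s (n + 1), gaussFactor j) *
      X ^ (s * (2 * (n + 1) + 1)) = gaussFactor n * ∑ s ∈ Finset.range (n + 1),
        (∏ j ∈ Finset.Ico s n, gaussFactor j) * X ^ (s * (2 * n + 3)) := by
    rw [Finset.mul_sum]
    refine Finset.sum_congr rfl fun s hs ↦ ?_
    rw [Finset.prod_Ico_succ_top (by grind)]
    ring
  rw [hs]
  linear_combination h + (∑ s ∈ Finset.range (n + 1),
        (∏ j ∈ Finset.Ico s n, gaussFactor j) * X ^ (s * (2 * n + 3))) * gaussFactor_mul n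

/-- Shanks's finite form of Gauss's product for `ψ`. -/
theorem shanksSum_eq (n : ℕ) :
    shanksSum n = ∑ k ∈ Finset.Icc (-n : ℤ) n, X ^ (2 * k ^ 2 + k).toNat := by
  induction n with
  | zero => simp [shanksSum]
  | succ n ih =>
    have h : Finset.Icc (-(n + 1 : ℕ) : ℤ) (n + 1 : ℕ) =
        insert (-(n + 1 : ℤ)) (insert (n + 1 : ℤ) (Finset.Icc (-n : ℤ) n)) := by
      ext k
      simp only [Finset.mem_insert, Finset.mem_Icc]
      lia
    rw [h, Finset.sum_insert (by simp; lia), Finset.sum_insert (by simp), ← ih, shanksSum_succ,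
      add_assoc, add_comm, add_assoc]
    congr 2
    · zify
      rw [Int.toNat_of_nonneg (by nlinarith)]
      ring
    · congr 2
      zify
      rw [Int.toNat_of_nonneg (by nlinarith)]
      ring

theorem tendsto_shanksSum : Tendsto shanksSum atTop (𝓝 ramanujanPsi) := by
  rw [WithPiTopology.tendsto_iff_coeff_tendsto]
  refine fun m ↦ tendsto_atTop_of_eventually_const (i₀ := m) fun n hn ↦ ?_
  rw [shanksSum_eq, ramanujanPsi]
  refine (coeff_countSeries_eq_coeff_sum isProper_two_mul_sq_add_self.nonneg _ fun i hi ↦ ?_).symm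
  rw [Finset.mem_Icc, not_and_or] at hi
  rcases hi with hi | hi <;> nlinarith

theorem coeff_prod_gaussFactor {m n : ℕ} (h : m < n) :
    coeff m (∏ j ∈ Finset.range n, gaussFactor j) = coeff m (shanksSum n) := by
  rw [shanksSum, Finset.sum_range_succ', map_add, map_sum, Finset.sum_eq_zero, zero_add,
    zero_mul, pow_zero, mul_one, Finset.range_eq_Ico]
  intro s _
  rw [coeff_mul_X_pow', if_neg]
  nlinarith

theorem tendsto_prod_gaussFactor :
    Tendsto (fun n ↦ ∏ j ∈ Finset.range n, gaussFactor j) atTop (𝓝 ramanujanPsi) := by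
  have h := tendsto_shanksSum
  rw [WithPiTopology.tendsto_iff_coeff_tendsto] at h ⊢
  refine fun m ↦ (h m).congr' ?_
  filter_upwards [eventually_gt_atTop m] with n hn using (coeff_prod_gaussFactor hn).symm

theorem prod_gaussFactor_mul_prod_one_sub_X_pow (n : ℕ) :
    (∏ j ∈ Finset.range n, gaussFactor j) * ∏ j ∈ Finset.range (2 * n), (1 - X ^ (j + 1)) =
      dilate 2 (∏ j ∈ Finset.range n, (1 - X ^ (j + 1))) ^ 2 := by
  induction n with
  | zero => simp
  | succ n ih =>
    rw [Finset.prod_range_succ, Finset.prod_range_succ _ n, map_mul, mul_pow, ← ih,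
      show 2 * (n + 1) = 2 * n + 1 + 1 from rfl]
    simp only [Finset.prod_range_succ, map_sub, map_one, map_pow, expand_X, ← pow_mul, mul_add_one]
    linear_combination (∏ j ∈ Finset.range n, gaussFactor j) *
      (∏ j ∈ Finset.range (2 * n), (1 - X ^ (j + 1))) * (1 - X ^ (2 * n + 2)) * gaussFactor_mul n

theorem ramanujanPsi_mul_eulerProduct :
    ramanujanPsi * eulerProduct = dilate 2 eulerProduct ^ 2 := by
  have h₁ := tendsto_prod_one_sub_X_pow one_pos
  simp only [one_mul] at h₁
  have hleft := tendsto_prod_gaussFactor.mul (tendsto_prod_one_sub_X_pow two_pos)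
  have hright := (((continuous_dilate 2).tendsto _).comp h₁).pow 2
  exact tendsto_nhds_unique (hleft.congr prod_gaussFactor_mul_prod_one_sub_X_pow) hright

theorem ramanujanPsi_ne_zero : ramanujanPsi ≠ 0 := fun h ↦ by
  simpa [h] using constantCoeff_ramanujanPsi

theorem isEtaLike_ramanujanPsi : IsEtaLike ramanujanPsi := by
  refine .of_mul_right ?_ isEtaLike_eulerProduct eulerProduct_ne_zero
  rw [ramanujanPsi_mul_eulerProduct, sq]
  exact isEtaLike_eulerProduct.dilate_two.mul isEtaLike_eulerProduct.dilate_two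

theorem isEtaLike_ramanujanPhi : IsEtaLike ramanujanPhi := by
  refine .of_mul_right ?_ isEtaLike_ramanujanPsi.dilate_two fun h ↦ ramanujanPsi_ne_zero ?_
  · rw [← ramanujanPsi_sq, sq]
    exact isEtaLike_ramanujanPsi.mul isEtaLike_ramanujanPsi
  · exact pow_eq_zero_iff two_ne_zero |>.mp (by rw [ramanujanPsi_sq, h, mul_zero])

end GaussProduct

section PedSeries

/-- The generating function of `ped`. -/
noncomputable def pedSeries : ℤ⟦X⟧ := PowerSeries.mk fun n ↦ (ped n : ℤ)

theorem coeff_evalNegHom_pedSeries (n : ℕ) :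
    coeff n (evalNegHom pedSeries) = (-1) ^ n * (ped n : ℤ) := by
  rw [evalNegHom, coeff_rescale, pedSeries, coeff_mk]

theorem hasProd_mk_ped (R : Type*) [CommSemiring R] [TopologicalSpace R] [T2Space R]
    [IsTopologicalSemiring R] : HasProd
    (fun i ↦ if Even (i + 1) then 1 + X ^ (i + 1) else ∑' j : ℕ, X ^ ((i + 1) * j))
    (PowerSeries.mk fun n ↦ (ped n : R)) := by
  convert! Nat.Partition.hasProd_genFun (fun i c ↦ if Even i → c ≤ 1 then (1 : R) else 0) using 1
  · ext1 i
    split_ifs with h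
    · rw [tsum_eq_single 0]
      · simp
      · intro j hj
        simp [h, hj]
    · rw [tsum_eq_zero_add' ?_]
      · simp [h]
      simp_rw [pow_mul, pow_add]
      apply Summable.mul_right
      exact WithPiTopology.summable_pow_of_constantCoeff_eq_zero (by simp)
  · simp_rw [Nat.Partition.genFun, ped, Fintype.card_subtype, Finset.card_filter, Finsupp.prod,
      Finset.prod_boole]
    simp

theorem tendsto_prod_pedSeries :
    Tendsto (fun n ↦ ∏ j ∈ Finset.range n,
      ((∑' i : ℕ, X ^ ((2 * j + 1) * i)) * (1 + X ^ (2 * j + 2)))) atTop (𝓝 pedSeries) := by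
  have h := ((hasProd_mk_ped ℤ).tendsto_prod_nat).comp (tendsto_id.const_mul_atTop' two_pos)
  refine h.congr fun n ↦ ?_
  simp only [Function.comp, id]
  induction n with
  | zero => simp
  | succ n ih =>
    rw [show 2 * (n + 1) = 2 * n + 1 + 1 from rfl, Finset.prod_range_succ, Finset.prod_range_succ,
      ih, Finset.prod_range_succ, if_neg (by grind), if_pos (by grind), mul_assoc]

theorem pedFactor_mul_evalNegHom_gaussFactor (j : ℕ) :
    (∑' i : ℕ, X ^ ((2 * j + 1) * i)) * (1 + X ^ (2 * j + 2)) * evalNegHom (gaussFactor j) =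
      dilate 2 (gaussFactor j) := by
  have hgeom : (∑' i : ℕ, X ^ ((2 * j + 1) * i)) * (1 - X ^ (2 * j + 1)) = (1 : ℤ⟦X⟧) := by
    simp_rw [pow_mul]
    exact WithPiTopology.tsum_pow_mul_one_sub_of_constantCoeff_eq_zero (by simp)
  have hneg := congrArg evalNegHom (gaussFactor_mul j)
  have hdilate := congrArg (dilate 2) (gaussFactor_mul j)
  simp only [map_mul, map_sub, map_one, map_pow, evalNegHom_X, expand_X,
    (odd_two_mul_add_one j).neg_pow, Even.neg_pow (show Even (2 * j + 2) by grind),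
    sub_neg_eq_add] at hneg hdilate
  have hne : (1 - (X ^ 2) ^ (2 * j + 1) : ℤ⟦X⟧) ≠ 0 := by
    rw [← pow_mul]
    exact one_sub_X_pow_succ_ne_zero (2 * (2 * j) + 1)
  apply mul_right_cancel₀ hne
  rw [hdilate]
  linear_combination
    (1 + X ^ (2 * j + 2)) * evalNegHom (gaussFactor j) * (1 + X ^ (2 * j + 1)) * hgeom +
      (1 + X ^ (2 * j + 2)) * hneg

theorem pedSeries_mul_evalNegHom_ramanujanPsi :
    pedSeries * evalNegHom ramanujanPsi = dilate 2 ramanujanPsi := by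
  have hleft := tendsto_prod_pedSeries.mul
    ((continuous_evalNegHom.tendsto _).comp tendsto_prod_gaussFactor)
  have hright := ((continuous_dilate 2).tendsto _).comp tendsto_prod_gaussFactor
  refine tendsto_nhds_unique (hleft.congr fun n ↦ ?_) hright
  rw [Function.comp_apply, Function.comp_apply, map_prod, map_prod, ← Finset.prod_mul_distrib]
  exact Finset.prod_congr rfl fun j _ ↦ pedFactor_mul_evalNegHom_gaussFactor j

theorem evalNegHom_evalNegHom {R : Type*} [CommRing R] (f : R⟦X⟧) :
    evalNegHom (evalNegHom f) = f := by
  simp [evalNegHom, rescale_rescale]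

theorem evalNegHom_dilate_two {R : Type*} [CommRing R] (f : R⟦X⟧) :
    evalNegHom (dilate 2 f) = dilate 2 f := by
  ext n
  rw [evalNegHom, coeff_rescale, coeff_expand]
  split_ifs with hn
  · rw [(even_iff_two_dvd.mpr hn).neg_one_pow, one_mul]
  · rw [mul_zero]

theorem evalNegHom_pedSeries_mul_ramanujanPhi :
    evalNegHom pedSeries * ramanujanPhi = ramanujanPsi := by
  have h := congrArg evalNegHom pedSeries_mul_evalNegHom_ramanujanPsi
  rw [map_mul, evalNegHom_evalNegHom, evalNegHom_dilate_two] at h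
  apply mul_left_cancel₀ ramanujanPsi_ne_zero
  linear_combination ramanujanPhi * h - ramanujanPsi_sq

end PedSeries

section Dissection

local notation "φ" => ramanujanPhi
local notation "ψ" => ramanujanPsi

theorem multisection_two_mul_cubicNorm {R : Type*} [CommRing R] {f g g₀ g₁ g₂ t : R⟦X⟧}
    (hg : IsTrisection g g₀ g₁ g₂) (h : f * g = dilate 3 t) :
    multisection 3 2 f * cubicNorm g = t * (g₁ ^ 2 - g₀ * g₂) := by
  have hfg := (isTrisection_multisection f).mul hg
  rw [h] at hfg
  obtain ⟨h₀, h₁, h₂⟩ := hfg.unique (isTrisection_dilate t)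
  rw [hg.cubicNorm_eq]
  -- Cramer's rule for the three components of `f`
  linear_combination (g₁ ^ 2 - g₀ * g₂) * h₀ + (X * g₂ ^ 2 - g₀ * g₁) * h₁ +
    (g₀ ^ 2 - X * g₁ * g₂) * h₂

variable {b : ℤ⟦X⟧}

theorem norm_mul_dilate_three_ramanujanPhi (hb : IsTrisection φ (dilate 3 φ) (2 * b) 0) :
    (dilate 3 φ ^ 3 + 8 * X * b ^ 3) * dilate 3 φ = φ ^ 4 := by
  rw [← isEtaLike_ramanujanPhi, hb.cubicNorm_eq]
  ring

theorem trisection_ramanujanPsi_sq (hb : IsTrisection φ (dilate 3 φ) (2 * b) 0) :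
    multisection 3 0 ψ ^ 2 =
        dilate 3 φ * dilate 2 (multisection 3 0 ψ) + 2 * X * b * dilate 2 (dilate 3 ψ) ∧
      multisection 3 0 ψ * dilate 3 ψ = b * dilate 2 (multisection 3 0 ψ) ∧
      dilate 3 ψ ^ 2 = dilate 3 φ * dilate 2 (dilate 3 ψ) := by
  have hψ := isTrisection_ramanujanPsi
  have h := hψ.mul hψ
  rw [← sq, ramanujanPsi_sq] at h
  obtain ⟨h₀, h₁, h₂⟩ := h.unique (hb.mul hψ.dilate_two)
  rw [map_zero] at h₀ h₁ h₂
  have htwo : (2 : ℤ⟦X⟧) ≠ 0 := fun h ↦ by simpa [map_ofNat] using congrArg constantCoeff h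
  refine ⟨by linear_combination h₀, mul_left_cancel₀ htwo ?_, by linear_combination h₂⟩
  linear_combination h₁

theorem dilate_three_ramanujanPsi_mul_ramanujanPhi_sq
    (hb : IsTrisection φ (dilate 3 φ) (2 * b) 0) :
    dilate 3 ψ * φ ^ 2 = dilate 3 φ * (2 * multisection 3 0 ψ * b - dilate 3 φ * dilate 3 ψ) := by
  obtain ⟨h₀, h₁, h₂⟩ := trisection_ramanujanPsi_sq hb
  have hprod : multisection 3 0 ψ * dilate 3 φ *
      (multisection 3 0 ψ * b - dilate 3 φ * dilate 3 ψ) = 2 * X * b ^ 2 * dilate 3 ψ ^ 2 := by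
    linear_combination dilate 3 φ * b * h₀ - dilate 3 φ ^ 2 * h₁ - 2 * X * b ^ 2 * h₂
  have hsq : (dilate 3 ψ * φ ^ 2) ^ 2 =
      (dilate 3 φ * (2 * multisection 3 0 ψ * b - dilate 3 φ * dilate 3 ψ)) ^ 2 := by
    linear_combination -dilate 3 ψ ^ 2 * norm_mul_dilate_three_ramanujanPhi hb -
      4 * dilate 3 φ * b * hprod
  refine (sq_eq_sq_iff_eq_or_eq_neg.mp hsq).resolve_right fun hneg ↦ ?_
  have hb₁ := congrArg constantCoeff h₁
  have hneg₁ := congrArg constantCoeff hneg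
  simp only [map_mul, map_neg, map_sub, map_pow, map_ofNat, constantCoeff_expand,
    constantCoeff_multisection_zero, constantCoeff_ramanujanPhi, constantCoeff_ramanujanPsi]
    at hb₁ hneg₁
  lia

theorem multisection_one_mul_ramanujanPhi_sq {f : ℤ⟦X⟧} (hf : f * φ = ψ) :
    multisection 3 1 f * φ ^ 2 = dilate 3 (-(φ * ψ)) := by
  obtain ⟨b, hb⟩ := exists_isTrisection_ramanujanPhi
  have h := (isTrisection_multisection f).mul hb
  rw [hf] at h
  obtain ⟨h₀, h₁, h₂⟩ := h.unique isTrisection_ramanujanPsi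
  have hφ : φ ^ 2 ≠ 0 := fun h ↦ by
    simpa [constantCoeff_ramanujanPhi] using congrArg constantCoeff h
  apply mul_right_cancel₀ hφ
  have hsolve : multisection 3 1 f * (dilate 3 φ ^ 3 + 8 * X * b ^ 3) =
      dilate 3 φ * (dilate 3 φ * dilate 3 ψ - 2 * multisection 3 0 ψ * b) := by
    linear_combination -2 * dilate 3 φ * b * h₀ + dilate 3 φ ^ 2 * h₁ + 4 * X * b ^ 2 * h₂
  rw [map_neg, map_mul]
  linear_combination dilate 3 φ * hsolve -
    multisection 3 1 f * norm_mul_dilate_three_ramanujanPhi hb +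
    dilate 3 φ * dilate_three_ramanujanPsi_mul_ramanujanPhi_sq hb

theorem twelve_dvd_multisection {f : ℤ⟦X⟧} (hf : f * φ ^ 2 = dilate 3 (-(φ * ψ))) :
    12 ∣ multisection 3 2 f := by
  obtain ⟨b, hb⟩ := exists_isTrisection_ramanujanPhi
  have hsq : IsTrisection (φ ^ 2) (dilate 3 φ ^ 2) (4 * (dilate 3 φ * b)) (4 * b ^ 2) := by
    convert hb.mul hb using 1 <;> ring
  have h : multisection 3 2 f * cubicNorm φ ^ 2 = 12 * (-(φ * ψ) * dilate 3 φ ^ 2 * b ^ 2) := by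
    rw [sq, ← cubicNorm_mul, ← sq, multisection_two_mul_cubicNorm hsq hf]
    ring
  have hunit : IsUnit (cubicNorm φ ^ 2) := by
    rw [isUnit_iff_constantCoeff, hb.cubicNorm_eq]
    simp [constantCoeff_ramanujanPhi]
  exact hunit.dvd_mul_right.mp ⟨_, h⟩

end Dissection

theorem ped_9n_add_7_mod_12 (n : ℕ) : ped (9 * n + 7) ≡ 0 [MOD 12] := by
  have h : (12 : ℤ⟦X⟧) ∣ multisection 3 2 (multisection 3 1 (evalNegHom pedSeries)) :=
    twelve_dvd_multisection
      (multisection_one_mul_ramanujanPhi_sq evalNegHom_pedSeries_mul_ramanujanPhi)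
  rw [← map_ofNat (C (R := ℤ)), C_dvd_iff_forall_dvd_coeff] at h
  have hn := h n
  rw [coeff_multisection, coeff_multisection, show 3 * (3 * n + 2) + 1 = 9 * n + 7 by ring,
    coeff_evalNegHom_pedSeries, (isUnit_neg_one.pow _).dvd_mul_left] at hn
  exact Nat.modEq_zero_iff_dvd.mpr (by exact_mod_cast hn)
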